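/- Let λ ≥ 1 be a real number. If f is a close-to-convex function on the unit disk with Taylor coefficients a_k, then |λ a_4² − a_7| ≤ 16λ − 7. -/

import Mathlib

open Complex Metric

/-- The k-th Taylor coefficient of `f` at `0`: `a_k = f^{(k)}(0)/k!`. -/
noncomputable def taylorCoeff (f : ℂ → ℂ) (k : ℕ) : ℂ :=
  iteratedDeriv k f 0 / (Nat.factorial k)

/-- `g` is a (normalized) starlike function on the unit disk. -/
def IsStarlikeFn (g : ℂ → ℂ) : Prop :=
  DifferentiableOn ℂ g (ball (0 : ℂ) 1) ∧ g 0 = 0 ∧ deriv g 0 = 1 ∧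
    ∀ z ∈ ball (0 : ℂ) 1 \ {0}, 0 < (z * deriv g z / g z).re

/-- `f` is a (normalized) close-to-convex function on the unit disk. -/
def IsCloseToConvex (f : ℂ → ℂ) : Prop :=
  DifferentiableOn ℂ f (ball (0 : ℂ) 1) ∧ f 0 = 0 ∧ deriv f 0 = 1 ∧
    ∃ θ : ℝ, ∃ g : ℂ → ℂ, IsStarlikeFn g ∧
      ∀ z ∈ ball (0 : ℂ) 1 \ {0},
        0 < (Complex.exp (θ * Complex.I) * z * deriv f z / g z).re

/-!
A starlike `g` equals `z h ^ 2` with `1/2 < re h` by Jack's lemma, so a close-to-convex `f`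
satisfies `f' = h ^ 2 p`, where `e p` has positive real part for some unimodular `e`. By Herglotz'
representation, a bound for the real part of a linear functional of finitely many Taylor
coefficients of `f'` need only be checked on the kernels
`(1 - x z) / ((1 - a z) (1 - b z) (1 - y z))` with unimodular `x, a, b, y`. Feynman's
parametrization writes these as averages of `(1 - x z) / (1 - w z) ^ 3` with `‖w‖ ≤ 1`, and the
maximum principle in `w` reduces to `‖w‖ = 1`.

The quadratic functional is linearized by duality: `‖λ a₄ ^ 2 - a₇‖` is the supremum of
`re (2 c λ ξ a₄ - ξ ^ 2 a₇) - λ c ^ 2` over unimodular `ξ` and real `c`. On the kernels, with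
`U = ξ w ^ 3` and `V = ξ x w ^ 2`, what remains is an inequality on the torus.
-/

open scoped PowerSeries ComplexConjugate

section JetFunctionals

variable {R : Type*} [CommRing R]

/-- A linear functional on formal power series that depends only on finitely many coefficients. -/
def IsJetFunctional (L : R⟦X⟧ →ₗ[R] R) : Prop :=
  ∃ N : ℕ, ∀ F : R⟦X⟧, PowerSeries.X ^ N ∣ F → L F = 0

theorem isJetFunctional_coeff (n : ℕ) : IsJetFunctional (PowerSeries.coeff (R := R) n) :=
  ⟨n + 1, fun _ hF => PowerSeries.X_pow_dvd_iff.mp hF n n.lt_succ_self⟩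

namespace IsJetFunctional

variable {L L' : R⟦X⟧ →ₗ[R] R}

theorem smul (hL : IsJetFunctional L) (c : R) : IsJetFunctional (c • L) := by
  obtain ⟨N, hN⟩ := hL
  exact ⟨N, fun F hF => by simp [hN F hF]⟩

theorem sub (hL : IsJetFunctional L) (hL' : IsJetFunctional L') : IsJetFunctional (L - L') := by
  obtain ⟨N, hN⟩ := hL
  obtain ⟨N', hN'⟩ := hL'
  refine ⟨N + N', fun F hF => ?_⟩
  rw [LinearMap.sub_apply, hN F ((pow_dvd_pow _ (N.le_add_right N')).trans hF),
    hN' F ((pow_dvd_pow _ (N'.le_add_left N)).trans hF), sub_zero]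

theorem comp_mulLeft (hL : IsJetFunctional L) (G : R⟦X⟧) :
    IsJetFunctional (L ∘ₗ LinearMap.mulLeft R G) := by
  obtain ⟨N, hN⟩ := hL
  exact ⟨N, fun F hF => hN _ (hF.mul_left G)⟩

theorem exists_eq_sum (hL : IsJetFunctional L) :
    ∃ (N : ℕ) (c : ℕ → R), ∀ F, L F = ∑ n ∈ Finset.range N, c n * PowerSeries.coeff n F := by
  obtain ⟨N, hN⟩ := hL
  refine ⟨N, fun n => L (PowerSeries.X ^ n), fun F => ?_⟩
  rw [← sub_eq_zero]
  have htail : L (F - ∑ n ∈ Finset.range N, PowerSeries.coeff n F • PowerSeries.X ^ n) = 0 := by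
    refine hN _ (PowerSeries.X_pow_dvd_iff.mpr fun m hm => ?_)
    simp [PowerSeries.coeff_X_pow, hm]
  simpa [mul_comm] using htail

end IsJetFunctional

/-- The geometric series `(1 - a X)⁻¹`. -/
noncomputable def geomSeries (a : R) : R⟦X⟧ :=
  PowerSeries.rescale a (PowerSeries.mk 1)

theorem coeff_geomSeries (a : R) (n : ℕ) : PowerSeries.coeff n (geomSeries a) = a ^ n := by
  simp [geomSeries]

theorem coeff_geomSeries_pow_succ (a : R) (k n : ℕ) :
    PowerSeries.coeff n (geomSeries a ^ (k + 1)) = (k + n).choose k * a ^ n := by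
  rw [geomSeries, ← map_pow, PowerSeries.mk_one_pow_eq_mk_choose_add, PowerSeries.coeff_rescale,
    PowerSeries.coeff_mk, mul_comm]

theorem geomSeries_mul_one_sub (a : R) :
    geomSeries a * (1 - PowerSeries.C a * PowerSeries.X) = 1 := by
  have h := congrArg (PowerSeries.rescale a) (PowerSeries.mk_one_mul_one_sub_eq_one R)
  simpa [geomSeries, PowerSeries.rescale_X] using h

end JetFunctionals

section CoefficientwiseDerivative

variable {𝕜 : Type*} [NontriviallyNormedField 𝕜]

/-- Coefficientwise derivative of a curve of formal power series; the space of power series carries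
no norm, so this replaces `HasDerivAt`. -/
def HasCoeffDerivAt (F : 𝕜 → 𝕜⟦X⟧) (F' : 𝕜⟦X⟧) (t : 𝕜) : Prop :=
  ∀ n, HasDerivAt (fun s => PowerSeries.coeff n (F s)) (PowerSeries.coeff n F') t

namespace HasCoeffDerivAt

variable {F G : 𝕜 → 𝕜⟦X⟧} {F' G' : 𝕜⟦X⟧} {t : 𝕜}

theorem const (F : 𝕜⟦X⟧) (t : 𝕜) : HasCoeffDerivAt (fun _ => F) 0 t :=
  fun n => by simpa using hasDerivAt_const t (PowerSeries.coeff n F)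

theorem mul (hF : HasCoeffDerivAt F F' t) (hG : HasCoeffDerivAt G G' t) :
    HasCoeffDerivAt (fun s => F s * G s) (F' * G t + F t * G') t := by
  intro n
  simp only [map_add, PowerSeries.coeff_mul, ← Finset.sum_add_distrib]
  exact HasDerivAt.fun_sum fun p _ => (hF p.1).mul (hG p.2)

theorem pow (hF : HasCoeffDerivAt F F' t) (k : ℕ) :
    HasCoeffDerivAt (fun s => F s ^ (k + 1)) ((k + 1 : ℕ) * F t ^ k * F') t := by
  induction k with
  | zero => simpa using hF
  | succ k ih =>
    simp only [pow_succ _ (k + 1)]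
    convert ih.mul hF using 1
    push_cast
    ring

theorem map_isJetFunctional {L : 𝕜⟦X⟧ →ₗ[𝕜] 𝕜} (hF : HasCoeffDerivAt F F' t)
    (hL : IsJetFunctional L) : HasDerivAt (fun s => L (F s)) (L F') t := by
  obtain ⟨N, c, hc⟩ := hL.exists_eq_sum
  simp only [hc]
  exact HasDerivAt.fun_sum fun n _ => (hF n).const_mul (c n)

end HasCoeffDerivAt

theorem hasCoeffDerivAt_geomSeries (a : 𝕜) :
    HasCoeffDerivAt geomSeries (PowerSeries.X * geomSeries a ^ 2) a := by
  intro n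
  simp only [coeff_geomSeries]
  cases n with
  | zero => simpa using hasDerivAt_const a (1 : 𝕜)
  | succ n =>
    rw [PowerSeries.coeff_succ_X_mul, coeff_geomSeries_pow_succ a 1 n]
    simpa [add_comm] using hasDerivAt_pow (n + 1) a

theorem hasCoeffDerivAt_geomSeries_lineMap (y v t : 𝕜) :
    HasCoeffDerivAt (fun s => geomSeries (AffineMap.lineMap y v s))
      (PowerSeries.C (v - y) * (PowerSeries.X * geomSeries (AffineMap.lineMap y v t) ^ 2)) t := by
  intro n
  rw [PowerSeries.coeff_C_mul, mul_comm]
  exact (hasCoeffDerivAt_geomSeries _ n).comp t AffineMap.hasDerivAt_lineMap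

/-- The differential form of Feynman's parametrization
`(A ^ (k + 1) B)⁻¹ = ∫ (k + 1) t ^ k (t A + (1 - t) B) ^ (-(k + 2)) dt` over `[0, 1]`, for
`A = 1 - v X` and `B = 1 - y X`. -/
theorem hasCoeffDerivAt_feynman (k : ℕ) (y v t : 𝕜) :
    HasCoeffDerivAt
      (fun s => (PowerSeries.C s * geomSeries (AffineMap.lineMap y v s)) ^ (k + 1) * geomSeries y)
      (PowerSeries.C ((k + 1) * t ^ k) * geomSeries (AffineMap.lineMap y v t) ^ (k + 2)) t := by
  have hC : HasCoeffDerivAt (PowerSeries.C : 𝕜 → 𝕜⟦X⟧) 1 t := by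
    intro n
    rcases eq_or_ne n 0 with rfl | hn
    · simpa using hasDerivAt_id' t
    · simpa [PowerSeries.coeff_C, PowerSeries.coeff_one, hn] using hasDerivAt_const t (0 : 𝕜)
  convert ((hC.mul (hasCoeffDerivAt_geomSeries_lineMap y v t)).pow k).mul
    (HasCoeffDerivAt.const (geomSeries y) t) using 1
  have hy := geomSeries_mul_one_sub y
  have hw := geomSeries_mul_one_sub (AffineMap.lineMap y v t)
  set g := geomSeries (AffineMap.lineMap y v t)
  have hline : (PowerSeries.C (AffineMap.lineMap y v t) : 𝕜⟦X⟧)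
      = PowerSeries.C t * PowerSeries.C (v - y) + PowerSeries.C y := by
    rw [← map_mul, ← map_add, AffineMap.lineMap_apply_ring']
  have hg : g + PowerSeries.C t * (PowerSeries.C (v - y) * (PowerSeries.X * g ^ 2))
      = g ^ 2 * (1 - PowerSeries.C y * PowerSeries.X) := by
    rw [hline] at hw
    linear_combination -g * hw
  rw [one_mul, hg]
  simp only [map_mul, map_add, map_natCast, map_one, map_pow, mul_zero, add_zero, Nat.cast_succ]
  linear_combination -(k + 1) * PowerSeries.C t ^ k * g ^ (k + 2) * hy

end CoefficientwiseDerivative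

section CoefficientBounds

theorem re_map_geomSeries_pow_mul_geomSeries_le {L : ℂ⟦X⟧ →ₗ[ℂ] ℂ} (hL : IsJetFunctional L)
    {s : Set ℂ} (hs : Convex ℝ s) {k : ℕ} {M : ℝ}
    (hM : ∀ w ∈ s, (L (geomSeries w ^ (k + 2))).re ≤ M) {v y : ℂ} (hv : v ∈ s) (hy : y ∈ s) :
    (L (geomSeries v ^ (k + 1) * geomSeries y)).re ≤ M := by
  have hderiv (t : ℝ) := ((hasCoeffDerivAt_feynman k y v t).map_isJetFunctional hL).real_of_complex
  have hbound (t : ℝ) : HasDerivAt (fun t => M * t ^ (k + 1)) (M * ((k + 1) * t ^ k)) t := by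
    simpa using (hasDerivAt_pow (k + 1) t).const_mul M
  have key := image_le_of_deriv_right_le_deriv_boundary (a := 0) (b := 1)
    (fun t _ => (hderiv t).continuousAt.continuousWithinAt)
    (fun t _ => (hderiv t).hasDerivWithinAt) (by simp)
    (fun t _ => (hbound t).continuousAt.continuousWithinAt)
    (fun t _ => (hbound t).hasDerivWithinAt) (fun t ht => ?_) (Set.right_mem_Icc.mpr zero_le_one)
  · simpa using key
  · have hw : AffineMap.lineMap y v (t : ℂ) ∈ s := by
      convert hs.lineMap_mem hy hv ⟨ht.1, ht.2.le⟩ using 1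
      simp [AffineMap.lineMap_apply]
    have hre : (L (PowerSeries.C ((k + 1) * (t : ℂ) ^ k)
          * geomSeries (AffineMap.lineMap y v (t : ℂ)) ^ (k + 2))).re
        = (k + 1) * t ^ k * (L (geomSeries (AffineMap.lineMap y v (t : ℂ)) ^ (k + 2))).re := by
      rw [← PowerSeries.smul_eq_C_mul, map_smul, smul_eq_mul, ← re_ofReal_mul]
      push_cast
      rfl
    rw [hre, mul_comm M]
    exact mul_le_mul_of_nonneg_left (hM _ hw) (mul_nonneg (by positivity) (pow_nonneg ht.1 k))

theorem re_le_of_forall_mem_frontier_re_le {φ : ℂ → ℂ} {U : Set ℂ} (hU : Bornology.IsBounded U)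
    (hφ : DiffContOnCl ℂ φ U) {M : ℝ} (hM : ∀ z ∈ frontier U, (φ z).re ≤ M) {z : ℂ}
    (hz : z ∈ closure U) : (φ z).re ≤ M := by
  have hexp : DiffContOnCl ℂ (fun z => exp (φ z)) U :=
    differentiable_exp.comp_diffContOnCl hφ
  have key := norm_le_of_forall_mem_frontier_norm_le hU hexp (C := Real.exp M)
    (fun w hw => by simpa only [norm_exp, Real.exp_le_exp] using hM w hw) hz
  simpa only [norm_exp, Real.exp_le_exp] using key

theorem re_map_geomSeries_pow_le {L : ℂ⟦X⟧ →ₗ[ℂ] ℂ} (hL : IsJetFunctional L) {k : ℕ} {M : ℝ}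
    (hM : ∀ w : ℂ, ‖w‖ = 1 → (L (geomSeries w ^ (k + 1))).re ≤ M) {w : ℂ} (hw : ‖w‖ ≤ 1) :
    (L (geomSeries w ^ (k + 1))).re ≤ M := by
  have hd : Differentiable ℂ fun w => L (geomSeries w ^ (k + 1)) := fun w =>
    (((hasCoeffDerivAt_geomSeries w).pow k).map_isJetFunctional hL).differentiableAt
  refine re_le_of_forall_mem_frontier_re_le isBounded_ball hd.diffContOnCl (U := ball 0 1)
    (fun z hz => hM z ?_) ?_
  · simpa [frontier_ball] using hz
  · simpa [closure_ball] using hw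

theorem re_map_geomSeries_mul_mul_le {L : ℂ⟦X⟧ →ₗ[ℂ] ℂ} (hL : IsJetFunctional L) {M : ℝ}
    (hM : ∀ w : ℂ, ‖w‖ = 1 → (L (geomSeries w ^ 3)).re ≤ M) {a b y : ℂ}
    (ha : ‖a‖ ≤ 1) (hb : ‖b‖ ≤ 1) (hy : ‖y‖ ≤ 1) :
    (L (geomSeries a * geomSeries b * geomSeries y)).re ≤ M := by
  have hconv : Convex ℝ (closedBall (0 : ℂ) 1) := convex_closedBall 0 1
  rw [← mem_closedBall_zero_iff] at ha hb hy
  have hsq : ∀ v ∈ closedBall (0 : ℂ) 1, (L (geomSeries y * geomSeries v ^ 2)).re ≤ M := by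
    intro v hv
    rw [mul_comm]
    refine re_map_geomSeries_pow_mul_geomSeries_le hL hconv (k := 1) (fun w hw => ?_) hv hy
    exact re_map_geomSeries_pow_le hL hM (mem_closedBall_zero_iff.mp hw)
  have key := re_map_geomSeries_pow_mul_geomSeries_le (hL.comp_mulLeft (geomSeries y)) hconv
    (k := 0) hsq ha hb
  simpa [mul_comm (geomSeries y)] using key

end CoefficientBounds

section TaylorSeries

/-- The Taylor series of `f` at `0`, as a formal power series. -/
noncomputable def taylorSeries (f : ℂ → ℂ) : ℂ⟦X⟧ :=
  PowerSeries.mk (taylorCoeff f)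

theorem coeff_taylorSeries (f : ℂ → ℂ) (n : ℕ) :
    PowerSeries.coeff n (taylorSeries f) = taylorCoeff f n :=
  PowerSeries.coeff_mk n _

theorem coeff_taylorSeries_deriv (f : ℂ → ℂ) (n : ℕ) :
    PowerSeries.coeff n (taylorSeries (deriv f)) = (n + 1) * taylorCoeff f (n + 1) := by
  rw [coeff_taylorSeries, taylorCoeff, taylorCoeff, ← iteratedDeriv_succ', Nat.factorial_succ]
  push_cast
  field_simp [Nat.cast_add_one_ne_zero n]

theorem taylorSeries_congr {f g : ℂ → ℂ} (h : f =ᶠ[nhds 0] g) :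
    taylorSeries f = taylorSeries g := by
  ext n
  rw [coeff_taylorSeries, coeff_taylorSeries, taylorCoeff, taylorCoeff, h.iteratedDeriv_eq]

theorem taylorSeries_mul {f g : ℂ → ℂ} (hf : AnalyticAt ℂ f 0) (hg : AnalyticAt ℂ g 0) :
    taylorSeries (f * g) = taylorSeries f * taylorSeries g := by
  ext n
  rw [PowerSeries.coeff_mul, Finset.Nat.sum_antidiagonal_eq_sum_range_succ_mk, coeff_taylorSeries,
    taylorCoeff, iteratedDeriv_mul hf.contDiffAt hg.contDiffAt, Finset.sum_div]
  refine Finset.sum_congr rfl fun i hi => ?_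
  rw [coeff_taylorSeries, coeff_taylorSeries, taylorCoeff, taylorCoeff,
    Nat.cast_choose ℂ (Finset.mem_range_succ_iff.mp hi)]
  have hfact (m : ℕ) : (m.factorial : ℂ) ≠ 0 := Nat.cast_ne_zero.mpr m.factorial_ne_zero
  field_simp [hfact]

theorem taylorSeries_const (c : ℂ) : taylorSeries (fun _ => c) = PowerSeries.C c := by
  ext n
  rw [coeff_taylorSeries, taylorCoeff, iteratedDeriv_const, PowerSeries.coeff_C]
  split_ifs with hn <;> simp [hn]

theorem taylorSeries_add {f g : ℂ → ℂ} (hf : AnalyticAt ℂ f 0) (hg : AnalyticAt ℂ g 0) :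
    taylorSeries (f + g) = taylorSeries f + taylorSeries g := by
  ext n
  simp only [map_add, coeff_taylorSeries, taylorCoeff,
    iteratedDeriv_add hf.contDiffAt hg.contDiffAt, add_div]

end TaylorSeries

section Herglotz

/-- Normalized analytic functions on the unit disc with values in the half-plane `1/2 < re`; by
Herglotz' theorem they are the averages of the functions `z ↦ (1 - y z)⁻¹` with `‖y‖ = 1`. -/
def IsHalfPlaneFn (h : ℂ → ℂ) : Prop :=
  DifferentiableOn ℂ h (ball 0 1) ∧ h 0 = 1 ∧ ∀ z ∈ ball (0 : ℂ) 1, 1 / 2 < (h z).re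

theorem circleAverage_eq_center {A : ℂ → ℂ} {r : ℝ} (hr : 0 < r)
    (hA : DifferentiableOn ℂ A (closedBall 0 r)) :
    CircleIntegrable A 0 r ∧ Real.circleAverage A 0 r = A 0 := by
  refine ⟨(hA.continuousOn.mono sphere_subset_closedBall).circleIntegrable hr.le,
    DiffContOnCl.circleAverage ?_⟩
  rw [abs_of_pos hr]
  exact (hA.mono closure_ball_subset_closedBall).diffContOnCl

theorem circleAverage_div_pow {h : ℂ → ℂ} {r : ℝ} (hr : 0 < r)
    (hh : DifferentiableOn ℂ h (closedBall 0 r)) (n : ℕ) :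
    Real.circleAverage (fun z => h z / z ^ n) 0 r = taylorCoeff h n := by
  have hcauchy := hh.circleIntegral_one_div_sub_center_pow_smul hr n
  rw [Real.circleAverage_eq_circleIntegral hr.ne', taylorCoeff]
  have hintegrand : ∀ z : ℂ, (z - 0)⁻¹ • (h z / z ^ n) = (1 / (z - 0) ^ (n + 1)) • h z := by
    intro z
    simp only [sub_zero, smul_eq_mul]
    ring
  simp_rw [hintegrand]
  rw [hcauchy, smul_eq_mul, smul_eq_mul]
  field_simp [two_pi_I_ne_zero]

theorem circleAverage_mul_sum_div_pow {h : ℂ → ℂ} {r : ℝ} (hr : 0 < r)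
    (hh : DifferentiableOn ℂ h (closedBall 0 r)) (N : ℕ) (c : ℕ → ℂ) :
    CircleIntegrable (fun z => h z * ∑ n ∈ Finset.range N, c n * (r / z) ^ n) 0 r ∧
      Real.circleAverage (fun z => h z * ∑ n ∈ Finset.range N, c n * (r / z) ^ n) 0 r
        = ∑ n ∈ Finset.range N, c n * (r ^ n * taylorCoeff h n) := by
  have hsum : (fun z => h z * ∑ n ∈ Finset.range N, c n * (r / z) ^ n)
      = fun z => ∑ n ∈ Finset.range N, (c n * r ^ n) • (h z / z ^ n) := by
    ext z
    simp only [Finset.mul_sum, smul_eq_mul, div_pow]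
    exact Finset.sum_congr rfl fun n _ => by ring
  have hint (n : ℕ) : CircleIntegrable (fun z => (c n * r ^ n) • (h z / z ^ n)) 0 r := by
    refine (ContinuousOn.circleIntegrable' ?_).const_smul
    rw [abs_of_pos hr]
    refine (hh.continuousOn.mono sphere_subset_closedBall).div (by fun_prop) fun z hz => ?_
    exact pow_ne_zero n (ne_of_mem_sphere hz hr.ne')
  rw [hsum]
  refine ⟨CircleIntegrable.fun_sum _ fun n _ => hint n, ?_⟩
  rw [Real.circleAverage_fun_sum fun n _ => hint n]
  refine Finset.sum_congr rfl fun n _ => ?_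
  rw [Real.circleAverage_fun_smul, circleAverage_div_pow hr hh, smul_eq_mul, mul_assoc]

theorem conj_sum_mul_div_pow {r : ℝ} (N : ℕ) (c : ℕ → ℂ) {z : ℂ} (hz : ‖z‖ = r) (hr : 0 < r) :
    conj (∑ n ∈ Finset.range N, c n * (r / z) ^ n)
      = ∑ n ∈ Finset.range N, conj (c n) * (z / r) ^ n := by
  have hconj : conj z = r * (r / z) := by
    have hz0 : z ≠ 0 := by rw [← norm_pos_iff, hz]; exact hr
    rw [← mul_div_assoc, eq_div_iff hz0, ← ofReal_mul, ← pow_two, ← hz, conj_mul', ofReal_pow]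
  have hr0 : (r : ℂ) ≠ 0 := ofReal_ne_zero.mpr hr.ne'
  have hy : conj ((r : ℂ) / z) = z / r := by
    rw [← conj_conj (z / r), map_div₀ (starRingEnd ℂ) z, hconj, conj_ofReal,
      mul_div_cancel_left₀ _ hr0]
  simp only [map_sum, map_mul, map_pow, hy]

theorem IsHalfPlaneFn.re_sum_le {h : ℂ → ℂ} (hh : IsHalfPlaneFn h) {M : ℝ} {N : ℕ} {c : ℕ → ℂ}
    (hM : ∀ y : ℂ, ‖y‖ = 1 → (∑ n ∈ Finset.range N, c n * y ^ n).re ≤ M) {r : ℝ} (hr : 0 < r)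
    (hr1 : r < 1) : (∑ n ∈ Finset.range N, c n * (r ^ n * taylorCoeff h n)).re ≤ M := by
  obtain ⟨hd, h0, hre⟩ := hh
  have hdr : DifferentiableOn ℂ h (closedBall 0 r) := hd.mono (closedBall_subset_ball hr1)
  let P (z : ℂ) : ℂ := ∑ n ∈ Finset.range N, c n * (r / z) ^ n
  let Q (z : ℂ) : ℂ := ∑ n ∈ Finset.range N, conj (c n) * (z / r) ^ n
  -- On the circle `Q = conj P`, so that `(2 re h - 1) * (M - re P) = re (A - h * P)`, where `A` is
  -- analytic with `A 0 = M` and averages therefore to `M`.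
  let A (z : ℂ) : ℂ := M * (2 * h z - 1) - (h z - 1) * Q z
  obtain ⟨hPint, hPavg⟩ := circleAverage_mul_sum_div_pow hr hdr N c
  have hAd : DifferentiableOn ℂ A (closedBall 0 r) := by
    have hQ : Differentiable ℂ Q := by unfold Q; fun_prop
    exact (((hdr.const_mul 2).sub_const 1).const_mul _).sub
      ((hdr.sub_const 1).mul hQ.differentiableOn)
  obtain ⟨hAint, hAavg⟩ := circleAverage_eq_center hr hAd
  have hA0 : A 0 = M := by
    simp only [A, h0]
    ring
  have hpos : 0 ≤ Real.circleAverage (reCLM ∘ (A - fun z => h z * P z)) 0 r := by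
    refine Real.circleAverage_nonneg_of_nonneg fun z hz => ?_
    rw [abs_of_pos hr, mem_sphere_zero_iff_norm] at hz
    have hP : (P z).re ≤ M := hM _ (by
      rw [norm_div, hz, norm_real, Real.norm_of_nonneg hr.le, div_self hr.ne'])
    have hQ : Q z = conj (P z) := (conj_sum_mul_div_pow N c hz hr).symm
    have hreA : (reCLM ∘ (A - fun z => h z * P z)) z = (2 * (h z).re - 1) * (M - (P z).re) := by
      simp [A, hQ]
      ring
    have hhz := hre z (by rwa [mem_ball_zero_iff, hz])
    exact hreA.symm ▸ mul_nonneg (by linarith) (by linarith)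
  rw [ContinuousLinearMap.circleAverage_comp_comm _ (hAint.sub hPint),
    Real.circleAverage_sub hAint hPint, hAavg, hA0, hPavg] at hpos
  simpa using hpos

theorem IsHalfPlaneFn.re_map_taylorSeries_le {h : ℂ → ℂ} (hh : IsHalfPlaneFn h)
    {L : ℂ⟦X⟧ →ₗ[ℂ] ℂ} (hL : IsJetFunctional L) {M : ℝ}
    (hM : ∀ y : ℂ, ‖y‖ = 1 → (L (geomSeries y)).re ≤ M) : (L (taylorSeries h)).re ≤ M := by
  obtain ⟨N, c, hc⟩ := hL.exists_eq_sum
  simp only [hc, coeff_geomSeries, coeff_taylorSeries] at hM ⊢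
  have hcont : Continuous fun r : ℝ =>
      (∑ n ∈ Finset.range N, c n * ((r : ℂ) ^ n * taylorCoeff h n)).re := by fun_prop
  have hlim := hcont.continuousWithinAt.tendsto (s := Set.Iio 1) (x := 1)
  simp only [ofReal_one, one_pow, one_mul] at hlim
  refine le_of_tendsto hlim ?_
  filter_upwards [Ioo_mem_nhdsLT zero_lt_one] with r hr
  exact hh.re_sum_le hM hr.1 hr.2

theorem exists_isHalfPlaneFn_of_re_mul_pos {p : ℂ → ℂ} {e : ℂ}
    (hp : DifferentiableOn ℂ p (ball 0 1)) (hp0 : p 0 = 1) (he : ‖e‖ = 1)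
    (hpe : ∀ z ∈ ball (0 : ℂ) 1, 0 < (e * p z).re) :
    ∃ (q : ℂ → ℂ) (μ : ℂ), ‖μ‖ = 1 ∧ IsHalfPlaneFn q ∧ ∀ z, p z = μ + (1 - μ) * q z := by
  have he0 : 0 < e.re := by simpa [hp0] using hpe 0 (mem_ball_self one_pos)
  set μ : ℂ := -conj e ^ 2 with hμ
  have hee : e * conj e = 1 := by
    rw [mul_conj', he]
    norm_num
  have hμe : e * μ = -conj e := by linear_combination (-conj e) * hee
  have hμe' : e * (1 - μ) = (2 * e.re : ℝ) := by
    rw [mul_sub, mul_one, hμe, sub_neg_eq_add, add_conj]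
  have hμ1 : 1 - μ ≠ 0 := fun h => by simp [h, he0.ne'] at hμe'
  refine ⟨fun z => 1 + (p z - 1) / (1 - μ), μ, by simp [hμ, he],
    ⟨((hp.sub_const 1).div_const _).const_add 1, by simp [hp0], fun z hz => ?_⟩, fun z => ?_⟩
  · set q : ℂ := 1 + (p z - 1) / (1 - μ) with hq
    have hep : e * p z = -conj e + (2 * e.re : ℝ) * q := by
      rw [← hμe, ← hμe', hq]
      field_simp
      ring
    have hre := hpe z hz
    rw [hep, add_re, re_ofReal_mul, neg_re, conj_re] at hre
    nlinarith
  · field_simp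
    ring

theorem re_map_taylorSeries_le_of_re_mul_pos {p : ℂ → ℂ} {e : ℂ}
    (hp : DifferentiableOn ℂ p (ball 0 1)) (hp0 : p 0 = 1) (he : ‖e‖ = 1)
    (hpe : ∀ z ∈ ball (0 : ℂ) 1, 0 < (e * p z).re) {L : ℂ⟦X⟧ →ₗ[ℂ] ℂ} (hL : IsJetFunctional L)
    {M : ℝ} (hM : ∀ x y : ℂ, ‖x‖ = 1 → ‖y‖ = 1 →
      (L ((1 - PowerSeries.C x * PowerSeries.X) * geomSeries y)).re ≤ M) :
    (L (taylorSeries p)).re ≤ M := by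
  obtain ⟨q, μ, hμ, hq, hpq⟩ := exists_isHalfPlaneFn_of_re_mul_pos hp hp0 he hpe
  have hqa : AnalyticAt ℂ q 0 := hq.1.analyticAt (ball_mem_nhds 0 one_pos)
  have hseries : taylorSeries p = PowerSeries.C μ + (1 - μ) • taylorSeries q := by
    rw [show p = (fun _ => μ) + (fun _ => 1 - μ) * q from funext hpq,
      taylorSeries_add analyticAt_const (analyticAt_const.mul hqa),
      taylorSeries_mul analyticAt_const hqa, taylorSeries_const, taylorSeries_const,
      PowerSeries.smul_eq_C_mul]
  have hkernel (y : ℂ) : (1 - PowerSeries.C (μ * y) * PowerSeries.X) * geomSeries y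
      = PowerSeries.C μ + (1 - μ) • geomSeries y := by
    rw [PowerSeries.smul_eq_C_mul, map_mul, map_sub, map_one]
    linear_combination PowerSeries.C μ * geomSeries_mul_one_sub y
  have key := hq.re_map_taylorSeries_le (hL.smul (1 - μ)) (M := M - (L (PowerSeries.C μ)).re)
    fun y hy => by
      have hMy := hM (μ * y) y (by rw [norm_mul, hμ, hy, one_mul]) hy
      rw [hkernel, map_add, map_smul, add_re] at hMy
      rw [LinearMap.smul_apply]
      linarith
  rw [hseries, map_add, map_smul, add_re]
  rw [LinearMap.smul_apply] at key
  linarith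

end Herglotz

section Jack

theorem sq_norm_one_add_ofReal_mul (t : ℝ) (u : ℂ) :
    ‖1 + t * u‖ ^ 2 = 1 + 2 * t * u.re + t ^ 2 * normSq u := by
  rw [Complex.sq_norm, normSq_add, normSq_one, normSq_mul, normSq_ofReal, map_mul, conj_ofReal,
    one_mul, re_ofReal_mul, conj_re]
  ring

theorem re_conj_mul_apply_le {w : ℂ → ℂ} {z₀ : ℂ} (hz₀ : z₀ ≠ 0)
    (hw : ∀ z, ‖z‖ < ‖z₀‖ → ‖w z‖ ≤ ‖z‖ / ‖z₀‖) (hw₀ : ‖w z₀‖ = 1) {u : ℂ} {t : ℝ} (ht0 : 0 < t)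
    (ht : 2 * u.re + t * normSq u < 0) :
    (conj (w z₀) * w (z₀ * (1 + t * u))).re ≤ 1 + t * u.re + t ^ 2 * (normSq u / 2) := by
  have hsq := sq_norm_one_add_ofReal_mul t u
  have hlt : ‖1 + t * u‖ < 1 := by
    nlinarith [norm_nonneg (1 + t * u), mul_neg_of_pos_of_neg ht0 ht]
  have hpos := norm_pos_iff.mpr hz₀
  have hwt := hw (z₀ * (1 + t * u)) (by rw [norm_mul]; exact mul_lt_of_lt_one_right hpos hlt)
  rw [norm_mul, mul_div_cancel_left₀ _ hpos.ne'] at hwt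
  calc (conj (w z₀) * w (z₀ * (1 + t * u))).re
      ≤ ‖conj (w z₀) * w (z₀ * (1 + t * u))‖ := re_le_norm _
    _ = ‖w (z₀ * (1 + t * u))‖ := by rw [norm_mul, RCLike.norm_conj, hw₀, one_mul]
    _ ≤ ‖1 + t * u‖ := hwt
    _ ≤ (1 + ‖1 + t * u‖ ^ 2) / 2 := by linarith [sq_nonneg (1 - ‖1 + t * u‖)]
    _ = 1 + t * u.re + t ^ 2 * (normSq u / 2) := by rw [hsq]; ring

theorem re_one_sub_conj_mul_deriv_mul_nonneg {w : ℂ → ℂ} {w' z₀ : ℂ} (hz₀ : z₀ ≠ 0)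
    (hw : ∀ z, ‖z‖ < ‖z₀‖ → ‖w z‖ ≤ ‖z‖ / ‖z₀‖) (hw₀ : ‖w z₀‖ = 1) (hd : HasDerivAt w w' z₀)
    {u : ℂ} (hu : u.re < 0) : 0 ≤ ((1 - conj (w z₀) * (z₀ * w')) * u).re := by
  set b := conj (w z₀) with hb
  have hbw : b * w z₀ = 1 := by
    rw [hb, conj_mul', hw₀]
    norm_num
  let ψ (t : ℝ) : ℝ := 1 + t * u.re + t ^ 2 * (normSq u / 2) - (b * w (z₀ * (1 + t * u))).re
  have hψ : HasDerivAt ψ (u.re - (b * (w' * (z₀ * u))).re) 0 := by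
    have hline : HasDerivAt (fun s : ℂ => z₀ * (1 + s * u)) (z₀ * u) ((0 : ℝ) : ℂ) := by
      simpa using (((hasDerivAt_id' ((0 : ℝ) : ℂ)).mul_const u).const_add 1).const_mul z₀
    have hwd : HasDerivAt w w' (z₀ * (1 + ((0 : ℝ) : ℂ) * u)) := by simpa using hd
    have hquad := (((hasDerivAt_id' (0 : ℝ)).mul_const u.re).const_add 1).add
      ((hasDerivAt_pow 2 (0 : ℝ)).mul_const (normSq u / 2))
    refine (hquad.sub ((hwd.comp ((0 : ℝ) : ℂ) hline).const_mul b).real_of_complex).congr_deriv ?_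
    simp
  have hinward : ∀ᶠ t : ℝ in nhdsWithin 0 (Set.Ioi 0), 2 * u.re + t * normSq u < 0 := by
    have hcont : Continuous fun t : ℝ => 2 * u.re + t * normSq u := by fun_prop
    exact nhdsWithin_le_nhds (hcont.continuousAt.eventually_lt_const (by simpa using by linarith))
  have hψ0 : ψ 0 = 0 := by
    simp [ψ, -mul_re, hbw]
  have hderiv : 0 ≤ u.re - (b * (w' * (z₀ * u))).re := by
    refine ge_of_tendsto hψ.tendsto_slope_zero_right ?_
    filter_upwards [hinward, self_mem_nhdsWithin] with t ht (ht0 : 0 < t)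
    have hψt : 0 ≤ ψ t := sub_nonneg.mpr (re_conj_mul_apply_le hz₀ hw hw₀ ht0 ht)
    simpa [hψ0] using mul_nonneg (inv_nonneg.mpr ht0.le) hψt
  rw [← sub_re] at hderiv
  convert hderiv using 2
  ring

theorem exists_one_le_mul_deriv_eq {w : ℂ → ℂ} {w' z₀ : ℂ} (hz₀ : z₀ ≠ 0)
    (hw : ∀ z, ‖z‖ < ‖z₀‖ → ‖w z‖ ≤ ‖z‖ / ‖z₀‖) (hw₀ : ‖w z₀‖ = 1) (hd : HasDerivAt w w' z₀) :
    ∃ m : ℝ, 1 ≤ m ∧ z₀ * w' = m * w z₀ := by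
  have hinward {u : ℂ} (hu : u.re < 0) := re_one_sub_conj_mul_deriv_mul_nonneg hz₀ hw hw₀ hd hu
  set D := conj (w z₀) * (z₀ * w') with hD
  have hre : 1 ≤ D.re := by simpa using hinward (u := -1) (by simp)
  have him : D.im = 0 := by
    by_contra hne
    have htilt (s : ℝ) : ((1 - D) * (-1 + s * I)).re = D.re - 1 + s * D.im := by
      simp
      ring
    have hneg := hinward (u := -1 + (-D.re / D.im : ℝ) * I) (by rw [add_re, re_ofReal_mul]; simp)
    rw [htilt, div_mul_cancel₀ _ hne] at hneg
    linarith
  refine ⟨D.re, hre, ?_⟩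
  have hDre : (D.re : ℂ) = D := by rw [← re_add_im D, him]; simp
  have hww : conj (w z₀) * w z₀ = 1 := by rw [conj_mul', hw₀]; norm_num
  rw [hDre, hD]
  linear_combination (-z₀ * w') * hww

theorem exists_norm_eq_one_and_forall_norm_lt_one {w : ℂ → ℂ}
    (hd : DifferentiableOn ℂ w (ball 0 1)) (hw0 : w 0 = 0) {z₁ : ℂ} (hz₁ : z₁ ∈ ball (0 : ℂ) 1)
    (hw1 : 1 ≤ ‖w z₁‖) :
    ∃ z₀ ∈ ball (0 : ℂ) 1, z₀ ≠ 0 ∧ ‖w z₀‖ = 1 ∧ ∀ z, ‖z‖ < ‖z₀‖ → ‖w z‖ < 1 := by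
  have hsub : closedBall (0 : ℂ) ‖z₁‖ ⊆ ball 0 1 :=
    closedBall_subset_ball (mem_ball_zero_iff.mp hz₁)
  let K := closedBall (0 : ℂ) ‖z₁‖ ∩ {z | 1 ≤ ‖w z‖}
  have hKcompact : IsCompact K := by
    refine (isCompact_closedBall 0 ‖z₁‖).of_isClosed_subset ?_ Set.inter_subset_left
    exact (hd.continuousOn.mono hsub).norm.preimage_isClosed_of_isClosed isClosed_closedBall
      isClosed_Ici
  obtain ⟨z₀, ⟨hz₀, hw₀⟩, hmin⟩ := hKcompact.exists_isMinOn ⟨z₁, by simp, hw1⟩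
    continuous_norm.continuousOn
  have hlt : ∀ z, ‖z‖ < ‖z₀‖ → ‖w z‖ < 1 := by
    intro z hz
    by_contra! hwz
    have hzK : z ∈ K := ⟨mem_closedBall_zero_iff.mpr
      (hz.le.trans (mem_closedBall_zero_iff.mp hz₀)), hwz⟩
    exact (hmin hzK).not_gt hz
  have hne : z₀ ≠ 0 := by
    rintro rfl
    rw [Set.mem_ofPred_eq, hw0, norm_zero] at hw₀
    exact zero_lt_one.not_ge hw₀
  refine ⟨z₀, hsub hz₀, hne, le_antisymm ?_ hw₀, hlt⟩
  have hcont : ContinuousWithinAt (fun z => ‖w z‖) (ball 0 ‖z₀‖) z₀ :=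
    (hd.continuousOn _ (hsub hz₀)).norm.mono
      (ball_subset_ball (mem_ball_zero_iff.mp (hsub hz₀)).le)
  refine hcont.closure_le (g := fun _ => 1) ?_ continuousWithinAt_const fun z hz =>
    (hlt z (mem_ball_zero_iff.mp hz)).le
  rw [closure_ball _ (norm_ne_zero_iff.mpr hne)]
  simp

/-- Jack's lemma. -/
theorem norm_lt_one_of_forall_mul_deriv_ne {w : ℂ → ℂ} (hd : DifferentiableOn ℂ w (ball 0 1))
    (hw0 : w 0 = 0) (H : ∀ z ∈ ball (0 : ℂ) 1, z ≠ 0 → ‖w z‖ = 1 →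
      ∀ m : ℝ, 1 ≤ m → z * deriv w z ≠ m * w z) :
    ∀ z ∈ ball (0 : ℂ) 1, ‖w z‖ < 1 := by
  intro z₁ hz₁
  by_contra! hw1
  obtain ⟨z₀, hz₀, hne, hw₀, hlt⟩ :=
    exists_norm_eq_one_and_forall_norm_lt_one hd hw0 hz₁ hw1
  have hschwarz : ∀ z, ‖z‖ < ‖z₀‖ → ‖w z‖ ≤ ‖z‖ / ‖z₀‖ := by
    intro z hz
    have hmaps : Set.MapsTo w (ball 0 ‖z₀‖) (closedBall (w 0) 1) := fun u hu => by
      rw [hw0]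
      exact mem_closedBall_zero_iff.mpr (hlt u (mem_ball_zero_iff.mp hu)).le
    have hdist := dist_le_div_mul_dist_of_mapsTo_ball
      (hd.mono (ball_subset_ball (mem_ball_zero_iff.mp hz₀).le)) hmaps (mem_ball_zero_iff.mpr hz)
    simpa [hw0, div_eq_inv_mul] using hdist
  obtain ⟨m, hm, heq⟩ := exists_one_le_mul_deriv_eq hne hschwarz hw₀
    (hd.differentiableAt (isOpen_ball.mem_nhds hz₀)).hasDerivAt
  exact H z₀ hz₀ hne hw₀ m hm heq

end Jack

section CloseToConvex

theorem exists_sq_eq_of_forall_ne_zero {G : ℂ → ℂ} (hG : DifferentiableOn ℂ G (ball 0 1))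
    (hG0 : G 0 = 1) (hne : ∀ z ∈ ball (0 : ℂ) 1, G z ≠ 0) :
    ∃ h : ℂ → ℂ, DifferentiableOn ℂ h (ball 0 1) ∧ h 0 = 1 ∧
      ∀ z ∈ ball (0 : ℂ) 1, h z ^ 2 = G z := by
  obtain ⟨l, hl0, hl⟩ :=
    ((hG.deriv isOpen_ball).div hG hne).isExactOn_ball.with_val_at 0 0
  have hderiv : ∀ z ∈ ball (0 : ℂ) 1, HasDerivAt (fun z => G z * exp (-l z)) 0 z := by
    intro z hz
    have hGz := (hG.differentiableAt (isOpen_ball.mem_nhds hz)).hasDerivAt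
    refine (hGz.mul (hl z hz).neg.cexp).congr_deriv ?_
    have hGne := hne z hz
    simp only [Pi.neg_apply, Pi.div_apply]
    field_simp
    ring
  have hexp : ∀ z ∈ ball (0 : ℂ) 1, exp (l z) = G z := by
    intro z hz
    have hconst : G z * exp (-l z) = G 0 * exp (-l 0) :=
      isOpen_ball.is_const_of_deriv_eq_zero (convex_ball (0 : ℂ) 1).isPreconnected
        (fun z hz => (hderiv z hz).differentiableAt.differentiableWithinAt)
        (fun z hz => (hderiv z hz).deriv) hz (mem_ball_self one_pos)
    rw [hG0, hl0, neg_zero, exp_zero, mul_one, exp_neg, mul_inv_eq_one₀ (exp_ne_zero _)] at hconst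
    exact hconst.symm
  refine ⟨fun z => exp (l z / 2), fun z hz => ?_, by simp [hl0], fun z hz => ?_⟩
  · exact ((hl z hz).div_const 2).cexp.differentiableAt.differentiableWithinAt
  · rw [← hexp z hz, ← exp_nat_mul]
    congr 1
    push_cast
    ring

theorem sq_norm_sub_one (u : ℂ) : ‖u - 1‖ ^ 2 = ‖u‖ ^ 2 + (1 - 2 * u.re) := by
  rw [Complex.sq_norm, Complex.sq_norm, normSq_sub, normSq_one, map_one, mul_one]
  ring

theorem isHalfPlaneFn_of_re_one_add_two_mul_pos {h : ℂ → ℂ}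
    (hd : DifferentiableOn ℂ h (ball 0 1)) (h0 : h 0 = 1) (hne : ∀ z ∈ ball (0 : ℂ) 1, h z ≠ 0)
    (hpos : ∀ z ∈ ball (0 : ℂ) 1, 0 < (1 + 2 * (z * deriv h z / h z)).re) :
    IsHalfPlaneFn h := by
  have hpos_norm : ∀ z ∈ ball (0 : ℂ) 1, 0 < ‖h z‖ := fun z hz => norm_pos_iff.mpr (hne z hz)
  refine ⟨hd, h0, fun z hz => ?_⟩
  have hlt := norm_lt_one_of_forall_mul_deriv_ne (w := fun z => (h z - 1) / h z)
    ((hd.sub_const 1).fun_div hd hne) (by simp [h0]) (fun z hz _ hnorm m hm heq => ?_) z hz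
  · rw [norm_div, div_lt_one (hpos_norm z hz)] at hlt
    have hsq := pow_lt_pow_left₀ hlt (norm_nonneg _) two_ne_zero
    rw [sq_norm_sub_one] at hsq
    linarith
  · have hz' := (hd.differentiableAt (isOpen_ball.mem_nhds hz)).hasDerivAt
    have hlog : z * deriv h z / h z = m * (h z - 1) := by
      have hhz := hne z hz
      rw [((hz'.sub_const 1).fun_div hz' hhz).deriv] at heq
      field_simp at heq ⊢
      linear_combination heq
    have hre : 1 - 2 * (h z).re = 0 := by
      rw [norm_div, div_eq_one_iff_eq (hpos_norm z hz).ne'] at hnorm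
      have hsq := sq_norm_sub_one (h z)
      rw [hnorm] at hsq
      linarith
    have hlogre : (1 + 2 * (m * (h z - 1))).re = 1 + 2 * (m * ((h z).re - 1)) := by simp
    have hcontra := hpos z hz
    rw [hlog, hlogre] at hcontra
    nlinarith

theorem IsStarlikeFn.exists_eq_mul_sq {g : ℂ → ℂ} (hg : IsStarlikeFn g) :
    ∃ h, IsHalfPlaneFn h ∧ ∀ z ∈ ball (0 : ℂ) 1, g z = z * h z ^ 2 := by
  obtain ⟨hd, hg0, hg1, hpos⟩ := hg
  have hG (z : ℂ) : g z = z * dslope g 0 z := by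
    simpa [hg0] using (sub_smul_dslope g 0 z).symm
  have hG0 : dslope g 0 0 = 1 := by rw [dslope_same, hg1]
  have hGd : DifferentiableOn ℂ (dslope g 0) (ball 0 1) :=
    (differentiableOn_dslope (ball_mem_nhds 0 one_pos)).mpr hd
  have hGne : ∀ z ∈ ball (0 : ℂ) 1, dslope g 0 z ≠ 0 := by
    intro z hz hGz
    rcases eq_or_ne z 0 with rfl | hz0
    · exact one_ne_zero (hG0.symm.trans hGz)
    · simpa [hG z, hGz] using hpos z ⟨hz, hz0⟩
  obtain ⟨h, hhd, hh0, hsq⟩ := exists_sq_eq_of_forall_ne_zero hGd hG0 hGne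
  have hgh : ∀ z ∈ ball (0 : ℂ) 1, g z = z * h z ^ 2 := fun z hz => by rw [hsq z hz, hG z]
  have hne : ∀ z ∈ ball (0 : ℂ) 1, h z ≠ 0 := fun z hz hhz =>
    hGne z hz (by rw [← hsq z hz, hhz, zero_pow two_ne_zero])
  refine ⟨h, isHalfPlaneFn_of_re_one_add_two_mul_pos hhd hh0 hne fun z hz => ?_, hgh⟩
  rcases eq_or_ne z 0 with rfl | hz0
  · simp
  have hz' := (hhd.differentiableAt (isOpen_ball.mem_nhds hz)).hasDerivAt
  have hderiv : deriv g z = 1 * h z ^ 2 + z * (2 * h z * deriv h z) := by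
    rw [(Filter.eventuallyEq_of_mem (isOpen_ball.mem_nhds hz) hgh).deriv_eq]
    simpa using ((hasDerivAt_id' z).fun_mul (hz'.fun_pow 2)).deriv
  convert hpos z ⟨hz, hz0⟩ using 2
  have hhz := hne z hz
  rw [hderiv, hgh z hz]
  field_simp

theorem re_pos_of_forall_ne_zero {φ : ℂ → ℂ} (hφ : DifferentiableOn ℂ φ (ball 0 1))
    (hpos : ∀ z ∈ ball (0 : ℂ) 1 \ {0}, 0 < (φ z).re) : ∀ z ∈ ball (0 : ℂ) 1, 0 < (φ z).re := by
  intro z hz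
  rcases ne_or_eq z 0 with hz0 | rfl
  · exact hpos z ⟨hz, hz0⟩
  have hhalf : (1 / 2 : ℝ) ≠ 0 := by norm_num
  have hd : DifferentiableOn ℂ φ (closedBall 0 (1 / 2)) :=
    hφ.mono (closedBall_subset_ball (by norm_num))
  obtain ⟨z₀, hz₀, hmin⟩ := (isCompact_sphere (0 : ℂ) (1 / 2)).exists_isMinOn
    (NormedSpace.sphere_nonempty.mpr (by norm_num))
    (continuous_re.comp_continuousOn (hd.continuousOn.mono sphere_subset_closedBall))
  have hle := re_le_of_forall_mem_frontier_re_le isBounded_ball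
    (hd.neg.mono closure_ball_subset_closedBall).diffContOnCl (M := -(φ z₀).re)
    (fun w hw => ?_) (subset_closure (mem_ball_self (by norm_num)))
  · rw [Pi.neg_apply, neg_re, neg_le_neg_iff] at hle
    refine (hpos z₀ ⟨?_, ne_of_mem_sphere hz₀ hhalf⟩).trans_le hle
    exact sphere_subset_closedBall.trans (closedBall_subset_ball (by norm_num)) hz₀
  · rw [frontier_ball _ hhalf] at hw
    exact neg_le_neg (hmin hw)

theorem IsCloseToConvex.exists_deriv_eq {f : ℂ → ℂ} (hf : IsCloseToConvex f) :
    ∃ (h p : ℂ → ℂ) (e : ℂ), IsHalfPlaneFn h ∧ DifferentiableOn ℂ p (ball 0 1) ∧ p 0 = 1 ∧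
      ‖e‖ = 1 ∧ (∀ z ∈ ball (0 : ℂ) 1, 0 < (e * p z).re) ∧
      ∀ z ∈ ball (0 : ℂ) 1, deriv f z = h z ^ 2 * p z := by
  obtain ⟨hd, -, hf1, θ, g, hg, hpos⟩ := hf
  obtain ⟨h, hh, hgh⟩ := hg.exists_eq_mul_sq
  have hne : ∀ z ∈ ball (0 : ℂ) 1, h z ≠ 0 := by
    intro z hz hhz
    have hre := hh.2.2 z hz
    norm_num [hhz] at hre
  have hpd : DifferentiableOn ℂ (fun z => deriv f z / h z ^ 2) (ball 0 1) :=
    (hd.deriv isOpen_ball).div (hh.1.pow 2) fun z hz => pow_ne_zero 2 (hne z hz)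
  refine ⟨h, fun z => deriv f z / h z ^ 2, exp (θ * I), hh, hpd, by simp [hf1, hh.2.1],
    norm_exp_ofReal_mul_I θ, ?_, fun z hz => ?_⟩
  · refine re_pos_of_forall_ne_zero (hpd.const_mul _) fun z hz => ?_
    convert hpos z hz using 2
    have hhz := hne z hz.1
    have hz0 : z ≠ 0 := hz.2
    rw [hgh z hz.1]
    field_simp
  · field_simp [hne z hz]

/-- The extreme points behind this bound have `f' = (1 - x z) / (1 - w z) ^ 3`
(Brickman, MacGregor and Wilken). -/
theorem IsCloseToConvex.re_map_taylorSeries_deriv_le {f : ℂ → ℂ} (hf : IsCloseToConvex f)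
    {L : ℂ⟦X⟧ →ₗ[ℂ] ℂ} (hL : IsJetFunctional L) {M : ℝ} (hM : ∀ x w : ℂ, ‖x‖ = 1 → ‖w‖ = 1 →
      (L ((1 - PowerSeries.C x * PowerSeries.X) * geomSeries w ^ 3)).re ≤ M) :
    (L (taylorSeries (deriv f))).re ≤ M := by
  obtain ⟨h, p, e, hh, hpd, hp0, he, hpe, hfac⟩ := hf.exists_deriv_eq
  have hnhds : ball (0 : ℂ) 1 ∈ nhds 0 := ball_mem_nhds 0 one_pos
  have hha : AnalyticAt ℂ h 0 := hh.1.analyticAt hnhds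
  have hseries : taylorSeries (deriv f) = taylorSeries h * taylorSeries h * taylorSeries p := by
    rw [taylorSeries_congr (g := h * h * p) (Filter.eventuallyEq_of_mem hnhds fun z hz => by
        simp [hfac z hz, pow_two]),
      taylorSeries_mul (hha.mul hha) (hpd.analyticAt hnhds), taylorSeries_mul hha hha]
  have hp : ∀ a b : ℂ, ‖a‖ = 1 → ‖b‖ = 1 →
      (L (geomSeries a * geomSeries b * taylorSeries p)).re ≤ M := by
    intro a b ha hb
    refine re_map_taylorSeries_le_of_re_mul_pos hpd hp0 he hpe (hL.comp_mulLeft _)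
      fun x y hx hy => ?_
    have hxaby := re_map_geomSeries_mul_mul_le (hL.comp_mulLeft _) (hM x · hx) ha.le hb.le hy.le
    simpa [mul_assoc, mul_left_comm] using hxaby
  have hhp : ∀ b : ℂ, ‖b‖ = 1 → (L (taylorSeries h * geomSeries b * taylorSeries p)).re ≤ M := by
    intro b hb
    have hbp := hh.re_map_taylorSeries_le (hL.comp_mulLeft (geomSeries b * taylorSeries p))
      fun a ha => by simpa [mul_comm, mul_left_comm] using hp a b ha hb
    simpa [mul_comm, mul_left_comm] using hbp
  have hhhp := hh.re_map_taylorSeries_le (hL.comp_mulLeft (taylorSeries h * taylorSeries p))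
    fun b hb => by simpa [mul_comm, mul_left_comm] using hhp b hb
  rw [hseries]
  simpa [mul_comm, mul_left_comm] using hhhp

end CloseToConvex

section Zalcman

theorem norm_mul_sq_sub_le_of_forall_re_le {lam K : ℝ} (hlam : 0 ≤ lam) {a b : ℂ}
    (hK : ∀ (ξ : ℂ) (c : ℝ), ‖ξ‖ = 1 →
      (2 * c * lam * ξ * a - ξ ^ 2 * b).re ≤ lam * c ^ 2 + K) :
    ‖lam * a ^ 2 - b‖ ≤ K := by
  obtain ⟨u, hu, hux⟩ := RCLike.exists_norm_eq_mul_self (lam * a ^ 2 - b)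
  obtain ⟨ξ, rfl⟩ := IsAlgClosed.exists_pow_nat_eq u two_pos
  have hξ : ‖ξ‖ = 1 := by
    rwa [norm_pow, pow_eq_one_iff_of_nonneg (norm_nonneg ξ) two_ne_zero] at hu
  set c := (ξ * a).re
  have hnorm : ‖lam * a ^ 2 - b‖ = lam * ((ξ * a) ^ 2).re - (ξ ^ 2 * b).re := by
    rw [← re_ofReal_mul, ← sub_re, ← ofReal_re ‖_‖]
    refine congrArg re (Eq.trans hux ?_)
    ring
  have hsq : ((ξ * a) ^ 2).re ≤ c ^ 2 := by
    rw [pow_two, mul_re]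
    nlinarith [mul_self_nonneg (ξ * a).im]
  have hlin : (2 * c * lam * ξ * a - ξ ^ 2 * b).re = 2 * c * lam * c - (ξ ^ 2 * b).re := by
    rw [← re_ofReal_mul, ← sub_re]
    push_cast
    ring_nf
  nlinarith [hK ξ c hξ, mul_le_mul_of_nonneg_left hsq hlam]

theorem zalcman_kernel_real_le {lam a s b t : ℝ} (hlam : 1 ≤ lam) (has : a ^ 2 + s ^ 2 = 1)
    (hbt : b ^ 2 + t ^ 2 = 1) :
    lam * ((5 * a - 3 * b) / 2) ^ 2 - (4 * (a ^ 2 - s ^ 2) - 3 * (a * b - s * t))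
      ≤ 16 * lam - 7 := by
  have ha : |a| ≤ 1 := abs_le_one_iff_mul_self_le_one.mpr (by nlinarith [sq_nonneg s])
  have hb : |b| ≤ 1 := abs_le_one_iff_mul_self_le_one.mpr (by nlinarith [sq_nonneg t])
  rw [abs_le] at ha hb
  have h16 : ((5 * a - 3 * b) / 2) ^ 2 ≤ 4 ^ 2 := sq_le_sq' (by linarith) (by linarith)
  have hlam1 : ((5 * a - 3 * b) / 2) ^ 2 - (4 * (a ^ 2 - s ^ 2) - 3 * (a * b - s * t)) ≤ 9 := by
    nlinarith [sq_nonneg (s + 3 * t), sq_nonneg (a + b)]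
  nlinarith [mul_nonneg (sub_nonneg.mpr hlam) (sub_nonneg.mpr h16)]

theorem zalcman_kernel_re_le {lam : ℝ} (hlam : 1 ≤ lam) (c : ℝ) {U V : ℂ} (hU : ‖U‖ = 1)
    (hV : ‖V‖ = 1) :
    (c * lam * (5 * U - 3 * V) - (4 * U ^ 2 - 3 * (U * V))).re
      ≤ lam * c ^ 2 + (16 * lam - 7) := by
  have hcircle {u : ℂ} (hu : ‖u‖ = 1) : u.re ^ 2 + u.im ^ 2 = 1 := by
    rw [pow_two, pow_two, ← normSq_apply, normSq_eq_norm_sq, hu, one_pow]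
  have hreal := zalcman_kernel_real_le hlam (hcircle hU) (hcircle hV)
  have hre : (c * lam * (5 * U - 3 * V) - (4 * U ^ 2 - 3 * (U * V))).re
      = c * lam * (5 * U.re - 3 * V.re)
        - (4 * (U.re ^ 2 - U.im ^ 2) - 3 * (U.re * V.re - U.im * V.im)) := by
    simp [pow_two]
  rw [hre]
  nlinarith [mul_nonneg (zero_le_one.trans hlam) (sq_nonneg (c - (5 * U.re - 3 * V.re) / 2))]

theorem coeff_succ_one_sub_C_mul_X_mul {R : Type*} [CommRing R] (x : R) (F : R⟦X⟧) (n : ℕ) :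
    PowerSeries.coeff (n + 1) ((1 - PowerSeries.C x * PowerSeries.X) * F)
      = PowerSeries.coeff (n + 1) F - x * PowerSeries.coeff n F := by
  rw [sub_mul, one_mul, mul_assoc, map_sub, PowerSeries.coeff_C_mul, PowerSeries.coeff_succ_X_mul]

/-- With `a₄ = coeff 3 f' / 4` and `a₇ = coeff 6 f' / 7`, this is the functional
`2 c λ ξ a₄ - ξ ^ 2 a₇` in terms of the Taylor series of `f'`. -/
noncomputable def zalcmanFunctional (lam c : ℝ) (ξ : ℂ) : ℂ⟦X⟧ →ₗ[ℂ] ℂ :=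
  (c * lam * ξ / 2) • PowerSeries.coeff 3 - (ξ ^ 2 / 7) • PowerSeries.coeff 6

theorem isJetFunctional_zalcmanFunctional (lam c : ℝ) (ξ : ℂ) :
    IsJetFunctional (zalcmanFunctional lam c ξ) :=
  ((isJetFunctional_coeff 3).smul _).sub ((isJetFunctional_coeff 6).smul _)

theorem zalcmanFunctional_taylorSeries_deriv (lam c : ℝ) (ξ : ℂ) (f : ℂ → ℂ) :
    zalcmanFunctional lam c ξ (taylorSeries (deriv f))
      = 2 * c * lam * ξ * taylorCoeff f 4 - ξ ^ 2 * taylorCoeff f 7 := by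
  simp only [zalcmanFunctional, LinearMap.sub_apply, LinearMap.smul_apply, smul_eq_mul,
    coeff_taylorSeries_deriv]
  push_cast
  ring

theorem re_zalcmanFunctional_kernel_le {lam : ℝ} (hlam : 1 ≤ lam) (c : ℝ) {ξ x w : ℂ}
    (hξ : ‖ξ‖ = 1) (hx : ‖x‖ = 1) (hw : ‖w‖ = 1) :
    (zalcmanFunctional lam c ξ ((1 - PowerSeries.C x * PowerSeries.X) * geomSeries w ^ 3)).re
      ≤ lam * c ^ 2 + (16 * lam - 7) := by
  have hkernel : zalcmanFunctional lam c ξ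
        ((1 - PowerSeries.C x * PowerSeries.X) * geomSeries w ^ 3)
      = c * lam * (5 * (ξ * w ^ 3) - 3 * (ξ * x * w ^ 2))
        - (4 * (ξ * w ^ 3) ^ 2 - 3 * (ξ * w ^ 3 * (ξ * x * w ^ 2))) := by
    simp only [zalcmanFunctional, LinearMap.sub_apply, LinearMap.smul_apply, smul_eq_mul,
      coeff_succ_one_sub_C_mul_X_mul, coeff_geomSeries_pow_succ, Nat.choose]
    push_cast
    ring
  rw [hkernel]
  exact zalcman_kernel_re_le hlam c (by simp [hξ, hw]) (by simp [hξ, hx, hw])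

end Zalcman

theorem generalized_zalcman_closeToConvex_n4_large_lambda
    (lam : ℝ) (hlam : 1 ≤ lam)
    (f : ℂ → ℂ) (hf : IsCloseToConvex f) :
    ‖(lam : ℂ) * (taylorCoeff f 4) ^ 2 - taylorCoeff f 7‖ ≤ 16 * lam - 7 := by
  refine norm_mul_sq_sub_le_of_forall_re_le (zero_le_one.trans hlam) fun ξ c hξ => ?_
  rw [← zalcmanFunctional_taylorSeries_deriv]
  exact hf.re_map_taylorSeries_deriv_le (isJetFunctional_zalcmanFunctional lam c ξ)
    fun x w hx hw => re_zalcmanFunctional_kernel_le hlam c hξ hx hw
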